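/- Let P = ℂ[[x₁,…,xₙ]] with maximal ideal m and let 0 ≠ f ∈ m. For every k ∈ ℕ there exists m₀ ∈ ℕ such that: for every ℂ-algebra automorphism φ of P with φ(m) = m and φ(f) ∈ (f) + m^{m₀+1}, there exists a ℂ-algebra automorphism ψ of P with ψ(m) = m, ψ(f) ∈ (f), and φ(xⱼ) − ψ(xⱼ) ∈ m^{k+2} for all j. -/

import Mathlib

noncomputable section
set_option synthInstance.maxHeartbeats 1000000
set_option maxHeartbeats 1000000

/-- The maximal ideal `m = (x₁,…,xₙ)` of `ℂ[[x₁,…,xₙ]]`. -/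
def mIdeal (n : ℕ) : Ideal (MvPowerSeries (Fin n) ℂ) :=
  Ideal.span (Set.range (MvPowerSeries.X : Fin n → MvPowerSeries (Fin n) ℂ))

/-!
A contact transformation of order `k` is a map `g ↦ u * σ g` with `u ≡ 1` modulo `𝔪` and `σ` an
algebra endomorphism that is trivial modulo `𝔪 ^ (k + 1)`. If an automorphism `φ` preserves `(f)`
modulo `𝔪 ^ N`, then `φ` can be corrected beyond its `k`-jet so as to preserve `(f)` modulo
`𝔪 ^ N'` exactly when, for some scalar `b ≠ 0`, the image of `f` under the `k`-jet of `φ`, scaled by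
`b`, lies modulo `𝔪 ^ N'` in the orbit of `f` under these transformations. Modulo `𝔪 ^ N'` they act
as a unipotent group, whose orbits are Zariski closed, so for varying `N'` the conditions on `b` and
the `k`-jet of `φ` define a decreasing sequence of algebraic sets. It is stationary by
noetherianity, and hence preserving `(f)` to a fixed high order suffices for preserving it, after
correction, to any order. Iterating with `k` growing produces a Cauchy sequence of automorphisms,
and its limit preserves `(f)` because ideals of `ℂ⟦x₁, …, xₙ⟧` are closed.
-/

section RegularMaps

variable {K X V W W' : Type*} [CommRing K] [AddCommGroup V] [Module K V] [AddCommGroup W]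
  [Module K W] [AddCommGroup W'] [Module K W']

/-- The `V`-valued regular maps on `X`, for a `K`-algebra `R` of functions on `X` playing the role
of the coordinate ring: the finite sums of maps `x ↦ r x • v` with `r ∈ R`. -/
def regularMaps (R : Subalgebra K (X → K)) (V : Type*) [AddCommGroup V] [Module K V] :
    Submodule R (X → V) :=
  Submodule.span R (Set.range (Function.const X))

variable {R : Subalgebra K (X → K)}

lemma const_mem_regularMaps (v : V) : (fun _ ↦ v) ∈ regularMaps R V :=
  Submodule.subset_span ⟨v, rfl⟩

lemma smul_const_mem_regularMaps {r : X → K} (hr : r ∈ R) (v : V) :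
    (fun x ↦ r x • v) ∈ regularMaps R V :=
  (regularMaps R V).smul_mem ⟨r, hr⟩ (const_mem_regularMaps v)

lemma regularMaps_induction {motive : (p : X → V) → p ∈ regularMaps R V → Prop}
    (zero : motive 0 (zero_mem _))
    (add : ∀ p q hp hq, motive p hp → motive q hq → motive (p + q) (add_mem hp hq))
    (smul_const : ∀ (r : X → K) (hr : r ∈ R) (v : V),
      motive (fun x ↦ r x • v) (smul_const_mem_regularMaps hr v))
    {p : X → V} (hp : p ∈ regularMaps R V) : motive p hp := by
  induction hp using Submodule.closure_induction with
  | zero => exact zero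
  | add p q hp hq hp' hq' => exact add p q hp hq hp' hq'
  | smul_mem r _ hv =>
    obtain ⟨v, rfl⟩ := hv
    exact smul_const r r.2 v

lemma map_mem_regularMaps (L : V →ₗ[K] W) {p : X → V} (hp : p ∈ regularMaps R V) :
    (fun x ↦ L (p x)) ∈ regularMaps R W := by
  induction hp using regularMaps_induction with
  | zero => simpa using const_mem_regularMaps (0 : W)
  | add p q _ _ hp hq =>
    simp only [Pi.add_apply, map_add]
    exact add_mem hp hq
  | smul_const r hr v => simpa using smul_const_mem_regularMaps hr (L v)

lemma map₂_mem_regularMaps (B : V →ₗ[K] W →ₗ[K] W') {p : X → V} {q : X → W}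
    (hp : p ∈ regularMaps R V) (hq : q ∈ regularMaps R W) :
    (fun x ↦ B (p x) (q x)) ∈ regularMaps R W' := by
  induction hp using regularMaps_induction with
  | zero => simpa using const_mem_regularMaps (0 : W')
  | add p p' _ _ hp hp' =>
    simp only [Pi.add_apply, map_add, LinearMap.add_apply]
    exact add_mem hp hp'
  | smul_const r hr v =>
    simp only [map_smul, LinearMap.smul_apply]
    exact (regularMaps R W').smul_mem ⟨r, hr⟩ (map_mem_regularMaps (B v) hq)

lemma mul_mem_regularMaps {A : Type*} [Ring A] [Algebra K A] {p q : X → A}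
    (hp : p ∈ regularMaps R A) (hq : q ∈ regularMaps R A) :
    (fun x ↦ p x * q x) ∈ regularMaps R A :=
  map₂_mem_regularMaps (LinearMap.mul K A) hp hq

lemma apply_mem_regularMaps {s : X → Module.End K V} (hs : s ∈ regularMaps R (Module.End K V))
    (v : V) : (fun x ↦ s x v) ∈ regularMaps R V :=
  map_mem_regularMaps (LinearMap.applyₗ v) hs

lemma mem_of_mem_regularMaps {p : X → K} (hp : p ∈ regularMaps R K) : p ∈ R := by
  induction hp using regularMaps_induction with
  | zero => exact zero_mem R
  | add p q _ _ hp hq => exact add_mem hp hq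
  | smul_const r hr c => exact mul_mem hr (algebraMap_mem R c)

variable (K) in
/-- The coordinate ring of the affine line: the polynomial functions on `K`. -/
def affineLine : Subalgebra K (K → K) := Algebra.adjoin K {id}

lemma id_mem_affineLine : id ∈ affineLine K := Algebra.self_mem_adjoin_singleton K _

lemma mem_affineLine {s : K → K} : s ∈ affineLine K ↔ ∃ P : Polynomial K, (P.eval ·) = s := by
  simp [affineLine, Algebra.adjoin_singleton_eq_range_aeval, funext_iff,
    Polynomial.aeval_fn_apply]

lemma comp_mem_of_mem_affineLine {s : K → K} (hs : s ∈ affineLine K) {r : X → K} (hr : r ∈ R) :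
    (fun x ↦ s (r x)) ∈ R := by
  induction hs using Algebra.adjoin_induction with
  | mem s hs =>
    obtain rfl := hs
    exact hr
  | algebraMap c => exact algebraMap_mem R c
  | add s t _ _ hs ht => exact add_mem hs ht
  | mul s t _ _ hs ht => exact mul_mem hs ht

lemma comp_mem_regularMaps {q : K → V} (hq : q ∈ regularMaps (affineLine K) V) {r : X → K}
    (hr : r ∈ R) : (fun x ↦ q (r x)) ∈ regularMaps R V := by
  induction hq using regularMaps_induction with
  | zero => exact zero_mem (regularMaps R V)
  | add q q' _ _ hq hq' => exact add_mem hq hq'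
  | smul_const s hs v => exact smul_const_mem_regularMaps (comp_mem_of_mem_affineLine hs hr) v

end RegularMaps

section Curves

lemma pow_eq_sum_choose_smul_sub_one_pow {K A : Type*} [CommRing K] [Ring A] [Algebra K A] {a : A}
    {r : ℕ} (ha : (a - 1) ^ r = 0) (n : ℕ) :
    a ^ n = ∑ l ∈ Finset.range r, (n.choose l : K) • (a - 1) ^ l := by
  have h_add_pow : a ^ n = ∑ l ∈ Finset.range (n + 1), (n.choose l : K) • (a - 1) ^ l := by
    simpa [Algebra.smul_def, (Nat.cast_commute _ _).eq] using
      (Commute.one_right (a - 1)).add_pow n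
  rw [h_add_pow]
  refine Finset.sum_congr_of_eq_on_inter (fun l _ hl ↦ ?_) (fun l _ hl ↦ ?_) fun _ _ _ ↦ rfl
  · simp [pow_eq_zero_of_le (by simpa using hl) ha]
  · simp [Nat.choose_eq_zero_of_lt (by simpa using hl)]

variable {K V : Type*} [Field K] [AddCommGroup V] [Module K V]

lemma choose_mem_affineLine (l : ℕ) :
    (fun t : K ↦ (descPochhammer K l).eval t / l.factorial) ∈ affineLine K :=
  mem_affineLine.2 ⟨.C (l.factorial : K)⁻¹ * descPochhammer K l, by
    ext t
    simp [div_eq_inv_mul]⟩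

variable [CharZero K]

-- The natural numbers are Zariski dense in the affine line.
lemma mem_of_forall_natCast_mem {p : K → V} (hp : p ∈ regularMaps (affineLine K) V)
    {S : Submodule K V} (h : ∀ n : ℕ, p n ∈ S) (t : K) : p t ∈ S := by
  by_contra ht
  obtain ⟨L, hLt, hLS⟩ := Submodule.exists_le_ker_of_notMem ht
  obtain ⟨P, hP⟩ := mem_affineLine.1 (mem_of_mem_regularMaps (map_mem_regularMaps L hp))
  have hP_root (n : ℕ) : P.IsRoot n := (congrFun hP n).trans (hLS (h n))
  have hP0 : P = 0 := P.eq_zero_of_infinite_isRoot <|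
    (Set.infinite_range_of_injective (Nat.cast_injective (R := K))).mono
      (Set.range_subset_iff.2 hP_root)
  exact hLt (by simpa [hP0] using (congrFun hP t).symm)

lemma eq_of_forall_natCast_eq {p q : K → V} (hp : p ∈ regularMaps (affineLine K) V)
    (hq : q ∈ regularMaps (affineLine K) V) (h : ∀ n : ℕ, p n = q n) (t : K) : p t = q t :=
  sub_eq_zero.1 <| (Submodule.mem_bot K).1 <|
    mem_of_forall_natCast_mem (sub_mem hp hq) (by simp [h]) t

lemma exists_mem_regularMaps_eq_pow {A : Type*} [Ring A] [Algebra K A] {a : A} {r : ℕ}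
    (ha : (a - 1) ^ r = 0) : ∃ q ∈ regularMaps (affineLine K) A, ∀ n : ℕ, q n = a ^ n := by
  refine ⟨∑ l ∈ Finset.range r,
      fun t ↦ ((descPochhammer K l).eval t / l.factorial) • (a - 1) ^ l,
    sum_mem fun l _ ↦ smul_const_mem_regularMaps (choose_mem_affineLine l) _, fun n ↦ ?_⟩
  simp [pow_eq_sum_choose_smul_sub_one_pow (K := K) ha, Nat.cast_choose_eq_descPochhammer_div]

end Curves

section AlgebraicSets

variable {K X : Type*} [CommRing K] {R : Subalgebra K (X → K)}

/-- A subset of `X` is algebraic if it is the set of common zeros of elements of the coordinate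
ring `R`. -/
def IsAlgebraicSet (R : Subalgebra K (X → K)) (Z : Set X) : Prop :=
  ∃ T ⊆ (R : Set (X → K)), Z = {x | ∀ h ∈ T, h x = 0}

lemma isAlgebraicSet_setOf_eq_zero {K X V : Type*} [Field K] [AddCommGroup V] [Module K V]
    {R : Subalgebra K (X → K)} {p : X → V} (hp : p ∈ regularMaps R V) :
    IsAlgebraicSet R {x | p x = 0} := by
  refine ⟨Set.range fun (L : Module.Dual K V) x ↦ L (p x), ?_, ?_⟩
  · rintro _ ⟨L, rfl⟩
    exact mem_of_mem_regularMaps (map_mem_regularMaps L hp)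
  · simp [Module.forall_dual_apply_eq_zero_iff]

/-- The ideal of the functions in `R` that vanish on `Z`. -/
def vanishingIdealOn (R : Subalgebra K (X → K)) (Z : Set X) : Ideal R where
  carrier := {h | ∀ x ∈ Z, (h : X → K) x = 0}
  zero_mem' := by simp
  add_mem' := by simp +contextual
  smul_mem' := by simp +contextual

lemma vanishingIdealOn_anti {Z Z' : Set X} (h : Z ⊆ Z') :
    vanishingIdealOn R Z' ≤ vanishingIdealOn R Z :=
  fun _ hh x hx ↦ hh x (h hx)

lemma IsAlgebraicSet.eq_setOf_vanishingIdealOn {Z : Set X} (hZ : IsAlgebraicSet R Z) :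
    Z = {x | ∀ h ∈ vanishingIdealOn R Z, (h : X → K) x = 0} := by
  obtain ⟨T, hT, rfl⟩ := hZ
  exact Set.Subset.antisymm (fun x hx h hh ↦ hh x hx)
    fun x hx h hh ↦ hx ⟨h, hT hh⟩ fun y hy ↦ hy h hh

lemma exists_forall_eq_of_antitone_isAlgebraicSet [IsNoetherianRing R] {Z : ℕ → Set X}
    (hZ : Antitone Z) (hZ_alg : ∀ N, IsAlgebraicSet R (Z N)) : ∃ N₀, ∀ N ≥ N₀, Z N = Z N₀ := by
  obtain ⟨N₀, hN₀⟩ := monotone_stabilizes_iff_noetherian.2 ‹IsNoetherianRing R›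
    ⟨fun N ↦ vanishingIdealOn R (Z N), fun _ _ h ↦ vanishingIdealOn_anti (hZ h)⟩
  refine ⟨N₀, fun N hN ↦ ?_⟩
  rw [(hZ_alg N).eq_setOf_vanishingIdealOn, (hZ_alg N₀).eq_setOf_vanishingIdealOn]
  exact congrArg (fun I : Ideal R ↦ {x | ∀ h ∈ I, (h : X → K) x = 0}) (hN₀ N hN).symm

end AlgebraicSets

section UnipotentMonoids

open Module

variable {K X V : Type*} [CommRing K] [AddCommGroup V] [Module K V] {R : Subalgebra K (X → K)}
  {F : ℕ → Submodule K V} {r i : ℕ} {G : Submonoid (End K V)} {τ : End K V} {a b e : V}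

/-- A monoid `G` of endomorphisms of `V` is unipotent with respect to the finite decreasing
filtration `F` if it acts trivially on the graded pieces; it is moreover required to be Zariski
closed, in the weak sense that a regular curve of endomorphisms with values in `G` at all natural
numbers lies in `G`. -/
structure IsUnipotent (F : ℕ → Submodule K V) (r : ℕ) (G : Submonoid (End K V)) : Prop where
  eq_top : F 0 = ⊤
  eq_bot : F r = ⊥
  antitone : Antitone F
  smodEq : ∀ τ ∈ G, ∀ i, ∀ a ∈ F i, τ a ≡ a [SMOD F (i + 1)]
  interpolation : ∀ q ∈ regularMaps (affineLine K) (End K V), (∀ n : ℕ, q n ∈ G) → ∀ t, q t ∈ G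

namespace IsUnipotent

lemma sub_one_pow_eq_zero (H : IsUnipotent F r G) (hτ : τ ∈ G) : (τ - 1) ^ r = 0 := by
  have h_mem (a : V) (l : ℕ) : ((τ - 1) ^ l) a ∈ F l := by
    induction l with
    | zero => simp [H.eq_top]
    | succ l ih =>
      rw [pow_succ', End.mul_apply]
      exact SModEq.sub_mem.1 (H.smodEq τ hτ l _ ih)
  ext a
  simpa [H.eq_bot] using h_mem a r

lemma map_smodEq (H : IsUnipotent F r G) (hτ : τ ∈ G) (hab : a ≡ b [SMOD F i]) :
    τ a ≡ τ b [SMOD F i] := by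
  rw [SModEq.sub_mem] at hab ⊢
  have h := H.antitone i.le_succ (SModEq.sub_mem.1 (H.smodEq τ hτ i _ hab))
  simpa using add_mem h hab

lemma map_smodEq_add (H : IsUnipotent F r G) (hτ : τ ∈ G) (he : e ∈ F i)
    (hab : a ≡ b + e [SMOD F (i + 1)]) : τ a ≡ τ b + e [SMOD F (i + 1)] :=
  calc
    τ a ≡ τ (b + e) [SMOD F (i + 1)] := H.map_smodEq hτ hab
    _ = τ b + τ e := map_add τ b e
    _ ≡ τ b + e [SMOD F (i + 1)] := SModEq.rfl.add (H.smodEq τ hτ i e he)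

/-- The vectors `e ∈ F i` such that some regular curve `q` in `G` moves `v` along the direction
`e` modulo `F (i + 1)`. -/
def translations (H : IsUnipotent F r G) (v : V) (i : ℕ) : Submodule K V where
  carrier := {e | e ∈ F i ∧ ∃ q ∈ regularMaps (affineLine K) (End K V),
    ∀ t, q t ∈ G ∧ q t v ≡ v + t • e [SMOD F (i + 1)]}
  zero_mem' := ⟨zero_mem _, 1, const_mem_regularMaps 1, by simp⟩
  add_mem' := by
    rintro e e' ⟨he, q, hq, hqt⟩ ⟨he', q', hq', hqt'⟩
    refine ⟨add_mem he he', _, mul_mem_regularMaps hq hq', fun t ↦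
      ⟨mul_mem (hqt t).1 (hqt' t).1, ?_⟩⟩
    calc
      q t (q' t v) ≡ q t v + t • e' [SMOD F (i + 1)] :=
        H.map_smodEq_add (hqt t).1 ((F i).smul_mem t he') (hqt' t).2
      _ ≡ v + t • e + t • e' [SMOD F (i + 1)] := (hqt t).2.add SModEq.rfl
      _ = v + t • (e + e') := by module
  smul_mem' := by
    rintro c e ⟨he, q, hq, hqt⟩
    refine ⟨(F i).smul_mem c he, fun t ↦ q (c • t), comp_mem_regularMaps hq
      ((affineLine K).smul_mem id_mem_affineLine c), fun t ↦ ⟨(hqt _).1, ?_⟩⟩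
    simpa [smul_smul, mul_comm] using (hqt (c • t)).2

lemma exists_regular_translation (H : IsUnipotent F r G) {v : V}
    {p : X → H.translations v i} (hp : p ∈ regularMaps R (H.translations v i)) :
    ∃ q ∈ regularMaps R (End K V), ∀ x, q x ∈ G ∧ q x v ≡ v + p x [SMOD F (i + 1)] := by
  induction hp using regularMaps_induction with
  | zero => exact ⟨1, const_mem_regularMaps 1, by simp⟩
  | smul_const ρ hρ w =>
    obtain ⟨-, q, hq, hqt⟩ := w.2
    exact ⟨_, comp_mem_regularMaps hq hρ, fun x ↦ hqt (ρ x)⟩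
  | add p p' _ _ hp hp' =>
    obtain ⟨q, hq, hqx⟩ := hp
    obtain ⟨q', hq', hqx'⟩ := hp'
    refine ⟨_, mul_mem_regularMaps hq hq', fun x ↦ ⟨mul_mem (hqx x).1 (hqx' x).1, ?_⟩⟩
    calc
      q x (q' x v) ≡ q x v + p' x [SMOD F (i + 1)] :=
        H.map_smodEq_add (hqx x).1 (p' x).2.1 (hqx' x).2
      _ ≡ v + p x + p' x [SMOD F (i + 1)] := (hqx x).2.add SModEq.rfl
      _ = v + (p + p') x := add_assoc _ _ _

section Field

variable {K X V : Type*} [Field K] [CharZero K] [AddCommGroup V] [Module K V]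
  {R : Subalgebra K (X → K)} {F : ℕ → Submodule K V} {r i : ℕ} {G : Submonoid (End K V)}
  {τ : End K V} {e : V}

lemma exists_curve_eq_pow (H : IsUnipotent F r G) (hτ : τ ∈ G) :
    ∃ q ∈ regularMaps (affineLine K) (End K V), (∀ n : ℕ, q n = τ ^ n) ∧ ∀ t, q t ∈ G := by
  obtain ⟨q, hq, hqn⟩ := exists_mem_regularMaps_eq_pow (K := K) (H.sub_one_pow_eq_zero hτ)
  exact ⟨q, hq, hqn, H.interpolation q hq fun n ↦ hqn n ▸ pow_mem hτ n⟩

lemma exists_mul_eq_one (H : IsUnipotent F r G) (hτ : τ ∈ G) : ∃ τ' ∈ G, τ' * τ = 1 := by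
  obtain ⟨q, hq, hqn, hqG⟩ := H.exists_curve_eq_pow hτ
  have h_succ (t : K) : q t * τ = q (t + 1) := by
    refine eq_of_forall_natCast_eq (p := fun t ↦ q t * τ) (q := fun t ↦ q (t + 1))
      (mul_mem_regularMaps hq (const_mem_regularMaps τ))
      (comp_mem_regularMaps hq (add_mem id_mem_affineLine (one_mem _))) (fun n ↦ ?_) t
    rw [hqn, ← Nat.cast_succ, hqn, pow_succ]
  refine ⟨q (-1), hqG _, ?_⟩
  simpa using (h_succ (-1)).trans (by simpa using hqn 0)

lemma mem_translations (H : IsUnipotent F r G) {v : V} (he : e ∈ F i) (hτ : τ ∈ G)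
    (hτv : τ v ≡ v + e [SMOD F (i + 1)]) : e ∈ H.translations v i := by
  obtain ⟨q, hq, hqn, hqG⟩ := H.exists_curve_eq_pow hτ
  have h_nat (n : ℕ) : (τ ^ n) v ≡ v + (n : K) • e [SMOD F (i + 1)] := by
    induction n with
    | zero => simp
    | succ n ih =>
      calc
        (τ ^ (n + 1)) v = τ ((τ ^ n) v) := by rw [pow_succ', End.mul_apply]
        _ ≡ τ v + (n : K) • e [SMOD F (i + 1)] :=
          H.map_smodEq_add hτ ((F i).smul_mem _ he) ih
        _ ≡ v + e + (n : K) • e [SMOD F (i + 1)] := hτv.add SModEq.rfl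
        _ = v + ((n + 1 : ℕ) : K) • e := by push_cast; module
  refine ⟨he, q, hq, fun t ↦ ⟨hqG t, SModEq.sub_mem.2 ?_⟩⟩
  refine mem_of_forall_natCast_mem (p := fun t ↦ q t v - (v + t • e)) ?_ (fun n ↦ ?_) t
  · exact sub_mem (apply_mem_regularMaps hq v) (add_mem (const_mem_regularMaps v)
      (smul_const_mem_regularMaps id_mem_affineLine e))
  · exact SModEq.sub_mem.1 (hqn n ▸ h_nat n)

lemma sub_mem_translations (H : IsUnipotent F r G) {σ : End K V} {v w : V} (hσ : σ ∈ G)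
    (hτ : τ ∈ G) (hσw : σ v ≡ w [SMOD F i]) (hτw : τ v ≡ w [SMOD F (i + 1)]) :
    w - σ v ∈ H.translations v i := by
  obtain ⟨σ', hσ', hσσ⟩ := H.exists_mul_eq_one hσ
  have he : w - σ v ∈ F i := SModEq.sub_mem.1 hσw.symm
  refine H.mem_translations he (mul_mem hσ' hτ) ?_
  calc
    σ' (τ v) ≡ σ' (σ v) + (w - σ v) [SMOD F (i + 1)] :=
      H.map_smodEq_add hσ' he (by simpa using hτw)
    _ = v + (w - σ v) := by rw [← End.mul_apply, hσσ, End.one_apply]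

lemma exists_regular_section (H : IsUnipotent F r G) (v : V) {g : X → V}
    (hg : g ∈ regularMaps R V) (i : ℕ) :
    ∃ s ∈ regularMaps R (End K V), (∀ x, s x ∈ G) ∧
      ∀ x, (∃ τ ∈ G, τ v ≡ g x [SMOD F i]) → s x v ≡ g x [SMOD F i] := by
  induction i with
  | zero => exact ⟨1, const_mem_regularMaps 1, fun _ ↦ one_mem G, by simp [H.eq_top]⟩
  | succ i ih =>
    obtain ⟨s, hs, hsG, hsv⟩ := ih
    set W := H.translations v i
    obtain ⟨π, hπ⟩ := W.subtype.exists_leftInverse_of_injective W.ker_subtype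
    obtain ⟨q, hq, hqv⟩ := H.exists_regular_translation
      (map_mem_regularMaps π (sub_mem hg (apply_mem_regularMaps hs v)))
    refine ⟨_, mul_mem_regularMaps hs hq, fun x ↦ mul_mem (hsG x) (hqv x).1, ?_⟩
    rintro x ⟨τ, hτ, hτx⟩
    have hsx : s x v ≡ g x [SMOD F i] := hsv x ⟨τ, hτ, hτx.mono (H.antitone i.le_succ)⟩
    have hW : g x - s x v ∈ W := H.sub_mem_translations (hsG x) hτ hsx hτx
    have hπx : (π (g x - s x v) : V) = g x - s x v :=
      congrArg Subtype.val (LinearMap.congr_fun hπ ⟨_, hW⟩)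
    calc
      s x (q x v) ≡ s x v + (g x - s x v) [SMOD F (i + 1)] :=
        H.map_smodEq_add (hsG x) hW.1 (hπx ▸ (hqv x).2)
      _ = g x := add_sub_cancel _ _

-- Whether `g x` lies in the orbit of `v` is decided by the single element `s x` of `G`, which
-- depends regularly on `x`.
theorem isAlgebraicSet_orbit (H : IsUnipotent F r G) (v : V) {g : X → V}
    (hg : g ∈ regularMaps R V) : IsAlgebraicSet R {x | ∃ τ ∈ G, τ v = g x} := by
  obtain ⟨s, hs, hsG, hsv⟩ := H.exists_regular_section v hg r
  simp only [H.eq_bot, SModEq.bot] at hsv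
  have h_orbit : {x | ∃ τ ∈ G, τ v = g x} = {x | s x v - g x = 0} := by
    ext x
    exact ⟨fun hx ↦ sub_eq_zero.2 (hsv x hx), fun hx ↦ ⟨s x, hsG x, sub_eq_zero.1 hx⟩⟩
  rw [h_orbit]
  exact isAlgebraicSet_setOf_eq_zero (sub_mem (apply_mem_regularMaps hs v) hg)

end Field

end IsUnipotent

end UnipotentMonoids

section AdicallyNearIdentity

variable {A : Type*} [CommRing A] {I : Ideal A}

lemma sub_self_mem_pow_add {σ : A →+* A} {k : ℕ} (hσ : ∀ a, σ a - a ∈ I ^ (k + 1)) {i : ℕ} {a : A}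
    (ha : a ∈ I ^ i) : σ a - a ∈ I ^ (i + k) := by
  induction i generalizing a with
  | zero => exact Ideal.pow_le_pow_right (by omega) (hσ a)
  | succ i ih =>
    rw [pow_succ'] at ha
    induction ha using Submodule.mul_induction_on' with
    | mem_mul_mem x hx b hb =>
      have hσb : σ b ∈ I ^ i := by
        simpa using add_mem (Ideal.pow_le_pow_right (by omega) (ih hb)) hb
      have h_left := Ideal.mul_mem_mul (hσ x) hσb
      have h_right := Ideal.mul_mem_mul hx (ih hb)
      rw [← pow_add, show k + 1 + i = i + 1 + k by omega] at h_left
      rw [← pow_succ', show i + k + 1 = i + 1 + k by omega] at h_right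
      convert add_mem h_left h_right using 1
      rw [map_mul]
      ring
    | add a _ b _ ha hb =>
      convert add_mem ha hb using 1
      rw [map_add]
      ring

lemma map_mem_pow_of_sub_self_mem {σ : A →+* A} {k : ℕ} (hσ : ∀ a, σ a - a ∈ I ^ (k + 1)) {i : ℕ}
    {a : A} (ha : a ∈ I ^ i) : σ a ∈ I ^ i := by
  simpa using add_mem (Ideal.pow_le_pow_right (by omega) (sub_self_mem_pow_add hσ ha)) ha

lemma eq_zero_of_forall_mem_pow [IsHausdorff I A] {a : A} (ha : ∀ i, a ∈ I ^ i) : a = 0 :=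
  IsHausdorff.haus ‹_› a fun i ↦ by simpa [SModEq.zero] using ha i

lemma exists_sub_mem_pow_of_cauchy [IsPrecomplete I A] {k : ℕ} {a : ℕ → A}
    (ha : ∀ i, a (i + 1) - a i ∈ I ^ (k + i)) : ∃ L, ∀ i, L - a i ∈ I ^ (k + i) := by
  have h_cauchy : AdicCompletion.IsAdicCauchy I A fun i ↦ a (i - k) := by
    rw [AdicCompletion.isAdicCauchy_iff]
    refine fun i ↦ (SModEq.sub_mem.2 ?_).symm
    rcases lt_or_ge i k with hi | hi
    · simp [Nat.sub_eq_zero_of_le, hi.le, hi]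
    · simpa [Nat.sub_add_comm hi, hi] using ha (i - k)
  obtain ⟨L, hL⟩ := IsPrecomplete.prec ‹_› h_cauchy
  exact ⟨L, fun i ↦ by simpa using SModEq.sub_mem.1 (hL (k + i)).symm⟩

-- Surjectivity: `σ a = g` is solved by successive approximation, iterating `a ↦ a + (g - σ a)`.
lemma bijective_of_sub_self_mem_pow_succ [IsAdicComplete I A] (σ : A →+ A)
    (hσ : ∀ i, ∀ a ∈ I ^ i, σ a - a ∈ I ^ (i + 1)) : Function.Bijective σ := by
  refine ⟨(injective_iff_map_eq_zero σ).2 fun a ha ↦ ?_, fun g ↦ ?_⟩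
  · refine eq_zero_of_forall_mem_pow (I := I) fun i ↦ ?_
    induction i with
    | zero => simp
    | succ i ih => simpa [ha] using hσ i a ih
  · let a (i : ℕ) : A := (fun b ↦ b + (g - σ b))^[i] 0
    have ha_succ (i : ℕ) : a (i + 1) = a i + (g - σ (a i)) := Function.iterate_succ_apply' ..
    have h_error (i : ℕ) : g - σ (a i) ∈ I ^ i := by
      induction i with
      | zero => simp
      | succ i ih =>
        convert neg_mem (hσ i _ ih) using 1
        rw [ha_succ, map_add]
        abel
    obtain ⟨L, hL⟩ := exists_sub_mem_pow_of_cauchy (I := I) (a := a) (k := 0)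
      fun i ↦ by simpa [ha_succ] using h_error i
    simp only [zero_add] at hL
    refine ⟨L, sub_eq_zero.1 (eq_zero_of_forall_mem_pow (I := I) fun i ↦ ?_)⟩
    have h_map : σ (L - a i) ∈ I ^ i := by
      simpa using add_mem (Ideal.pow_le_pow_right i.le_succ (hσ i _ (hL i))) (hL i)
    convert sub_mem h_map (h_error i) using 1
    rw [map_sub]
    abel

end AdicallyNearIdentity

section ContactMonoid

open Module

variable {K Q : Type*} [CommRing K] [CommRing Q] [Algebra K Q] {M : Ideal Q} {k r : ℕ}
  {τ : End K Q}

variable (K M k) in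
/-- The contact transformations `g ↦ u * σ g` of order `k`, where `u ≡ 1` modulo `M` and `σ` is an
algebra endomorphism which is trivial modulo `M ^ (k + 1)`. The unit `u` is encoded as `τ 1`. -/
def contactMonoid : Submonoid (End K Q) where
  carrier := {τ | τ 1 - 1 ∈ M ∧
    ∃ σ : Q →ₐ[K] Q, (∀ g, σ g - g ∈ M ^ (k + 1)) ∧ ∀ g, τ g = τ 1 * σ g}
  one_mem' := ⟨by simp, .id K Q, by simp⟩
  mul_mem' := by
    rintro τ τ' ⟨hτ, σ, hσ, hτσ⟩ ⟨hτ', σ', hσ', hτσ'⟩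
    refine ⟨?_, σ.comp σ', fun g ↦ ?_, fun g ↦ ?_⟩
    · have h_unit : τ 1 * (σ (τ' 1) - τ' 1) + τ 1 * (τ' 1 - 1) + (τ 1 - 1) ∈ M :=
        add_mem (add_mem (M.mul_mem_left _ (Ideal.pow_le_self k.succ_ne_zero (hσ _)))
          (M.mul_mem_left _ hτ')) hτ
      convert h_unit using 1
      rw [End.mul_apply, hτσ]
      ring
    · simpa using add_mem (hσ (σ' g)) (hσ' g)
    · simp only [End.mul_apply, AlgHom.comp_apply]
      rw [hτσ, hτσ' g, hτσ (τ' 1), map_mul, mul_assoc]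

lemma isUnit_of_sub_one_mem (hM : M ^ r = ⊥) {u : Q} (hu : u - 1 ∈ M) : IsUnit u := by
  have h_nil : IsNilpotent (u - 1) := ⟨r, by simpa [hM] using Ideal.pow_mem_pow hu r⟩
  simpa using h_nil.isUnit_one_add

lemma mem_contactMonoid_iff (hM : M ^ r = ⊥) : τ ∈ contactMonoid K M k ↔
    τ 1 - 1 ∈ M ∧ (∀ g h, τ (g * h) * τ 1 = τ g * τ h) ∧ ∀ g, τ g - g * τ 1 ∈ M ^ (k + 1) := by
  constructor
  · rintro ⟨hu, σ, hσ, hτσ⟩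
    refine ⟨hu, fun g h ↦ ?_, fun g ↦ ?_⟩
    · rw [hτσ (g * h), hτσ g, hτσ h, map_mul]
      ring
    · convert (M ^ (k + 1)).mul_mem_left (τ 1) (hσ g) using 1
      rw [hτσ g]
      ring
  · rintro ⟨hu, h_mul, h_near⟩
    obtain ⟨u, hu'⟩ := isUnit_of_sub_one_mem hM hu
    rw [← hu'] at h_mul h_near
    have h_inv : (u : Q) * ↑u⁻¹ = 1 := u.mul_inv
    let σ : Q →ₐ[K] Q := AlgHom.ofLinearMap (LinearMap.mulLeft K (↑u⁻¹ : Q) ∘ₗ τ) (by simp [← hu'])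
      fun g h ↦ by
        simp only [LinearMap.comp_apply, LinearMap.mulLeft_apply]
        linear_combination (↑u⁻¹ * ↑u⁻¹ : Q) * h_mul g h - (↑u⁻¹ * τ (g * h)) * h_inv
    have hσ (g : Q) : σ g = ↑u⁻¹ * τ g := rfl
    refine ⟨hu, σ, fun g ↦ ?_, fun g ↦ by simp [hσ, ← hu']⟩
    convert (M ^ (k + 1)).mul_mem_left (↑u⁻¹ : Q) (h_near g) using 1
    linear_combination hσ g + g * h_inv

lemma isUnipotent_contactMonoid {K : Type*} [Field K] [CharZero K] [Algebra K Q] (hk : k ≠ 0)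
    (hM : M ^ r = ⊥) :
    IsUnipotent (fun i ↦ (M ^ i).restrictScalars K) r (contactMonoid K M k) where
  eq_top := by simp
  eq_bot := by simp [hM]
  antitone _ _ hij := Ideal.pow_le_pow_right hij
  smodEq := by
    rintro τ ⟨hu, σ, hσ, hτσ⟩ i a ha
    have h_unit : (τ 1 - 1) * σ a ∈ M ^ (i + 1) :=
      pow_succ' M i ▸ Ideal.mul_mem_mul hu (map_mem_pow_of_sub_self_mem (σ := σ) hσ ha)
    have h_near : σ a - a ∈ M ^ (i + 1) :=
      Ideal.pow_le_pow_right (by omega) (sub_self_mem_pow_add (σ := σ) hσ ha)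
    refine SModEq.sub_mem.2 ?_
    rw [show τ a - a = (τ 1 - 1) * σ a + (σ a - a) by rw [hτσ a]; ring]
    exact add_mem h_unit h_near
  interpolation := by
    intro q hq hqn t
    simp only [mem_contactMonoid_iff hM] at hqn ⊢
    have hq_apply (g : Q) := apply_mem_regularMaps hq g
    refine ⟨?_, fun g h ↦ ?_, fun g ↦ ?_⟩
    · exact mem_of_forall_natCast_mem (sub_mem (hq_apply 1) (const_mem_regularMaps 1))
        (S := M.restrictScalars K) (fun n ↦ (hqn n).1) t
    · exact eq_of_forall_natCast_eq (mul_mem_regularMaps (hq_apply (g * h)) (hq_apply 1))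
        (mul_mem_regularMaps (hq_apply g) (hq_apply h)) (fun n ↦ (hqn n).2.1 g h) t
    · exact mem_of_forall_natCast_mem
        (sub_mem (hq_apply g) (mul_mem_regularMaps (const_mem_regularMaps g) (hq_apply 1)))
        (S := (M ^ (k + 1)).restrictScalars K) (fun n ↦ (hqn n).2.2 g) t

lemma exists_contactMonoid_quotient (hτ : τ ∈ contactMonoid K M k) (r : ℕ) :
    ∃ τ' ∈ contactMonoid K (M.map (Ideal.Quotient.mk (M ^ r))) k,
      ∀ g, τ' (Ideal.Quotient.mk _ g) = Ideal.Quotient.mk _ (τ g) := by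
  obtain ⟨hu, σ, hσ, hτσ⟩ := hτ
  let σ' : Q ⧸ M ^ r →ₐ[K] Q ⧸ M ^ r := Ideal.quotientMapₐ _ σ
    fun _ hg ↦ map_mem_pow_of_sub_self_mem (σ := σ) hσ hg
  have hσ' (g : Q) : σ' (Ideal.Quotient.mk _ g) = Ideal.Quotient.mk _ (σ g) := rfl
  refine ⟨LinearMap.mulLeft K (Ideal.Quotient.mk _ (τ 1)) ∘ₗ σ'.toLinearMap,
    ⟨?_, σ', fun g ↦ ?_, fun g ↦ ?_⟩, fun g ↦ ?_⟩
  · simpa using Ideal.mem_map_of_mem (Ideal.Quotient.mk (M ^ r)) hu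
  · obtain ⟨g, rfl⟩ := Ideal.Quotient.mk_surjective g
    rw [hσ', ← map_sub, ← Ideal.map_pow]
    exact Ideal.mem_map_of_mem _ (hσ g)
  · simp
  · simp [hσ', hτσ g]

lemma map_quotientMk_pow_eq_bot (M : Ideal Q) (r : ℕ) :
    M.map (Ideal.Quotient.mk (M ^ r)) ^ r = ⊥ := by
  rw [← Ideal.map_pow, Ideal.map_quotient_self]

end ContactMonoid

section AdicApproximation

variable {A : Type*} [CommRing A]

lemma mem_sup_pow_of_le {I J : Ideal A} {i j : ℕ} (hij : i ≤ j) {a : A} (ha : a ∈ J ⊔ I ^ j) :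
    a ∈ J ⊔ I ^ i := by
  have h_le : J ⊔ I ^ j ≤ J ⊔ I ^ i := sup_le_sup_left (Ideal.pow_le_pow_right hij) J
  exact h_le ha

lemma mem_of_forall_mem_sup_pow [IsNoetherianRing A] [IsLocalRing A] {J : Ideal A} {a : A}
    (ha : ∀ i, a ∈ J ⊔ IsLocalRing.maximalIdeal A ^ i) : a ∈ J := by
  have : IsHausdorff (IsLocalRing.maximalIdeal A) (A ⧸ J) := inferInstance
  rw [← Ideal.Quotient.eq_zero_iff_mem]
  refine IsHausdorff.haus this _ fun i ↦ ?_
  obtain ⟨b, hb, c, hc, rfl⟩ := Submodule.mem_sup.1 (ha i)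
  rw [SModEq.zero, map_add, Ideal.Quotient.eq_zero_iff_mem.2 hb, zero_add]
  simpa [Algebra.smul_def] using Submodule.smul_mem_smul hc (Submodule.mem_top (x := (1 : A ⧸ J)))

variable {K : Type*} [CommRing K] [Algebra K A] {I : Ideal A}

lemma exists_algEquiv_of_sub_mem_sq [IsAdicComplete I A] {φ : A ≃ₐ[K] A} {ψ : A →ₐ[K] A}
    (hψ : ∀ a, ψ a - φ a ∈ I ^ 2) : ∃ ψ' : A ≃ₐ[K] A, ∀ a, ψ' a = ψ a := by
  let σ : A →ₐ[K] A := ψ.comp φ.symm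
  have hσ (a : A) : σ a - a ∈ I ^ 2 := by simpa [σ] using hψ (φ.symm a)
  have h_bij : Function.Bijective σ := bijective_of_sub_self_mem_pow_succ (σ : A →+ A)
    fun i a ha ↦ sub_self_mem_pow_add (σ := σ) hσ ha
  exact ⟨φ.trans (.ofBijective σ h_bij), fun a ↦ by simp [σ]⟩

lemma exists_algEquiv_mem_sup_of_contactMonoid {K : Type*} [Field K] [Algebra K A]
    [IsAdicComplete I A] {k N : ℕ} (hk : k ≠ 0) {φ : A ≃ₐ[K] A} {ψ : A →ₐ[K] A}
    (hψ : ∀ a, ψ a - φ a ∈ I ^ (k + 1)) {f : A} {b : K} (hb : b ≠ 0) {τ : Module.End K A}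
    (hτ : τ ∈ contactMonoid K I k) (hτf : τ f - b • ψ f ∈ I ^ N) :
    ∃ φ' : A ≃ₐ[K] A, φ' f ∈ Ideal.span {f} ⊔ I ^ N ∧ ∀ a, φ' a - φ a ∈ I ^ (k + 1) := by
  obtain ⟨-, σ, hσ, hτσ⟩ := hτ
  have hk2 : I ^ (k + 1) ≤ I ^ 2 := Ideal.pow_le_pow_right (by omega)
  obtain ⟨ψ', hψ'⟩ := exists_algEquiv_of_sub_mem_sq fun a ↦ hk2 (hψ a)
  obtain ⟨σ', hσ'⟩ := exists_algEquiv_of_sub_mem_sq (φ := .refl) fun a ↦ hk2 (hσ a)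
  have h_symm (a : A) : σ'.symm a - a ∈ I ^ (k + 1) := by
    rw [← neg_mem_iff]
    simpa [← hσ'] using hσ (σ'.symm a)
  refine ⟨ψ'.trans σ'.symm, ?_, fun a ↦ ?_⟩
  · have h_symm_f : b • σ'.symm (ψ f) = σ'.symm (τ 1) * f - σ'.symm (τ f - b • ψ f) := by
      rw [hτσ f, map_sub, map_smul, map_mul, ← hσ', σ'.symm_apply_apply, sub_sub_cancel]
    have h_mem : b • σ'.symm (ψ f) ∈ Ideal.span {f} ⊔ I ^ N := by
      rw [h_symm_f]
      exact Submodule.sub_mem_sup (Ideal.mul_mem_left _ _ (Ideal.mem_span_singleton_self f))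
        (map_mem_pow_of_sub_self_mem (σ := σ'.symm) h_symm hτf)
    simpa [hψ', hb] using Submodule.smul_of_tower_mem _ b⁻¹ h_mem
  · simpa [hψ'] using add_mem (h_symm (ψ a)) (hψ a)

end AdicApproximation

section PowerSeries

open MvPowerSeries

lemma sub_truncTotal_mem_span_X_pow {ι R : Type*} [CommRing R] [Finite ι] (N : ℕ)
    (g : MvPowerSeries ι R) : g - truncTotal N g ∈ Ideal.span (Set.range (X (R := R))) ^ N := by
  let e := toAdicCompletionAlgEquiv ι R
  have h_map : (Ideal.span (Set.range (X (σ := ι) (R := R)))).map e =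
      (MvPolynomial.idealOfVars ι R).map (algebraMap ..) := by
    simp_rw [Ideal.map_span, ← Set.range_comp]
    congr 2
    ext1 j
    simp [e, AdicCompletion.algebraMap_apply, ← MvPolynomial.coe_X, toAdicCompletion_coe]
  rw [← Ideal.comap_map_of_bijective e e.bijective (I := Ideal.span _ ^ N), Ideal.mem_comap,
    Ideal.map_pow, h_map, ← Ideal.map_pow, ← Submodule.restrictScalars_mem (MvPolynomial ι R),
    ← Ideal.smul_top_eq_map,
    AdicCompletion.pow_smul_top_eq_ker_eval (MvPolynomial.idealOfVars_fg ι R)]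
  simp only [e, LinearMap.mem_ker, map_sub, toAdicCompletionAlgEquiv_apply, toAdicCompletion_coe,
    sub_eq_zero]
  exact toAdicCompletion_apply_eq_mk_truncTotal

variable {ι K : Type*} [Field K]

local notation "ℙ" => MvPowerSeries ι K

local notation "𝔪" => IsLocalRing.maximalIdeal (MvPowerSeries ι K)

lemma mem_maximalIdeal_iff {g : ℙ} : g ∈ 𝔪 ↔ constantCoeff g = 0 := by
  rw [IsLocalRing.mem_maximalIdeal, mem_nonunits_iff, MvPowerSeries.isUnit_iff_constantCoeff,
    isUnit_iff_ne_zero, not_not]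

lemma sub_C_constantCoeff_mem_maximalIdeal (g : ℙ) : g - C (constantCoeff g) ∈ 𝔪 :=
  mem_maximalIdeal_iff.2 (by simp)

lemma X_mem_maximalIdeal (j : ι) : (X j : ℙ) ∈ 𝔪 :=
  mem_maximalIdeal_iff.2 (by simp)

lemma constantCoeff_algHom_apply (ψ : ℙ →ₐ[K] ℙ) (g : ℙ) :
    constantCoeff (ψ g) = constantCoeff g := by
  have h : ψ (g - algebraMap K ℙ (constantCoeff (ψ g))) ∈ 𝔪 := by
    rw [map_sub, AlgHom.commutes, MvPowerSeries.algebraMap_apply]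
    exact sub_C_constantCoeff_mem_maximalIdeal (ψ g)
  have h' : g - algebraMap K ℙ (constantCoeff (ψ g)) ∈ 𝔪 := fun hu ↦ h (hu.map ψ)
  rw [mem_maximalIdeal_iff, MvPowerSeries.algebraMap_apply, map_sub, constantCoeff_C,
    sub_eq_zero] at h'
  exact h'.symm

lemma map_mem_maximalIdeal_iff (ψ : ℙ →ₐ[K] ℙ) {g : ℙ} : ψ g ∈ 𝔪 ↔ g ∈ 𝔪 := by
  rw [mem_maximalIdeal_iff, constantCoeff_algHom_apply, ← mem_maximalIdeal_iff]

lemma map_X_mem_maximalIdeal (ψ : ℙ →ₐ[K] ℙ) (j : ι) : ψ (X j) ∈ 𝔪 :=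
  (map_mem_maximalIdeal_iff ψ).2 (X_mem_maximalIdeal j)

lemma mkₐ_comp_X_mem_map (ψ : ℙ →ₐ[K] ℙ) (r : ℕ) (j : ι) :
    (Ideal.Quotient.mkₐ K (𝔪 ^ r)).comp ψ (X j) ∈ Ideal.map (Ideal.Quotient.mk (𝔪 ^ r)) 𝔪 :=
  Ideal.mem_map_of_mem (Ideal.Quotient.mk (𝔪 ^ r)) (map_X_mem_maximalIdeal ψ j)

section Finite

variable [Finite ι]

variable (ι K) in
lemma maximalIdeal_eq_span_X : 𝔪 = Ideal.span (Set.range X) := by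
  refine le_antisymm (fun g hg ↦ ?_)
    (Ideal.span_le.2 (Set.range_subset_iff.2 X_mem_maximalIdeal))
  have h_trunc : truncTotal 1 g = 0 := by
    ext d
    rcases eq_or_ne d 0 with rfl | hd
    · simpa [coeff_truncTotal_eq_ite] using mem_maximalIdeal_iff.1 hg
    · simp [coeff_truncTotal_eq_ite, Finsupp.degree_eq_zero_iff, hd]
  simpa [h_trunc] using sub_truncTotal_mem_span_X_pow 1 g

lemma sub_truncTotal_mem_pow (N : ℕ) (g : ℙ) : g - truncTotal N g ∈ 𝔪 ^ N :=
  maximalIdeal_eq_span_X ι K ▸ sub_truncTotal_mem_span_X_pow N g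

instance isAdicComplete_maximalIdeal : IsAdicComplete 𝔪 ℙ :=
  maximalIdeal_eq_span_X ι K ▸ inferInstance

lemma map_mem_pow_of_X {B : Type*} [CommRing B] [Algebra K B] {ψ : ℙ →ₐ[K] B} {I : Ideal B}
    (hψ : ∀ j, ψ (X j) ∈ I) {i : ℕ} {g : ℙ} (hg : g ∈ 𝔪 ^ i) : ψ g ∈ I ^ i := by
  have h_map : Ideal.map ψ 𝔪 ≤ I := by
    rw [maximalIdeal_eq_span_X, Ideal.map_span, Ideal.span_le]
    rintro _ ⟨_, ⟨j, rfl⟩, rfl⟩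
    exact hψ j
  exact Ideal.pow_right_mono h_map i (Ideal.map_pow ψ 𝔪 i ▸ Ideal.mem_map_of_mem ψ hg)

lemma map_eq_map_truncTotal {B : Type*} [CommRing B] [Algebra K B] {ψ : ℙ →ₐ[K] B} {I : Ideal B}
    {r : ℕ} (hI : I ^ r = ⊥) (hψ : ∀ j, ψ (X j) ∈ I) (g : ℙ) : ψ g = ψ (truncTotal r g) := by
  have h := map_mem_pow_of_X hψ (sub_truncTotal_mem_pow r g)
  rwa [hI, Ideal.mem_bot, map_sub, sub_eq_zero] at h

lemma algHom_ext_of_pow_eq_bot {B : Type*} [CommRing B] [Algebra K B] {ψ ψ' : ℙ →ₐ[K] B}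
    {I : Ideal B} {r : ℕ} (hI : I ^ r = ⊥) (hψ : ∀ j, ψ (X j) ∈ I)
    (h : ∀ j, ψ (X j) = ψ' (X j)) : ψ = ψ' := by
  have h_poly : ψ.comp (MvPolynomial.coeToMvPowerSeries.algHom K) =
      ψ'.comp (MvPolynomial.coeToMvPowerSeries.algHom K) :=
    MvPolynomial.algHom_ext fun j ↦ by simpa using h j
  ext g
  rw [map_eq_map_truncTotal hI hψ, map_eq_map_truncTotal (ψ := ψ') hI fun j ↦ h j ▸ hψ j]
  exact DFunLike.congr_fun h_poly (truncTotal r g)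

lemma sub_mem_pow_of_X {ψ ψ' : ℙ →ₐ[K] ℙ} {r : ℕ} (h : ∀ j, ψ (X j) - ψ' (X j) ∈ 𝔪 ^ r)
    (g : ℙ) : ψ g - ψ' g ∈ 𝔪 ^ r := by
  have h_eq : (Ideal.Quotient.mkₐ K (𝔪 ^ r)).comp ψ = (Ideal.Quotient.mkₐ K (𝔪 ^ r)).comp ψ' :=
    algHom_ext_of_pow_eq_bot (map_quotientMk_pow_eq_bot 𝔪 r) (mkₐ_comp_X_mem_map ψ r)
      fun j ↦ Ideal.Quotient.eq.2 (h j)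
  exact Ideal.Quotient.eq.1 (DFunLike.congr_fun h_eq g)

lemma exists_algHom_X_eq {y : ι → ℙ} (hy : ∀ j, y j ∈ 𝔪) :
    ∃ ψ : ℙ →ₐ[K] ℙ, ∀ j, ψ (X j) = y j :=
  have h_subst : HasSubst y := hasSubst_of_constantCoeff_zero fun j ↦ mem_maximalIdeal_iff.1 (hy j)
  ⟨substAlgHom h_subst, substAlgHom_X h_subst⟩

variable {k N r : ℕ}

lemma exists_algHom_lift_quotient_pow {σ : ℙ ⧸ 𝔪 ^ r →ₐ[K] ℙ ⧸ 𝔪 ^ r}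
    (hσ : ∀ a, σ a - a ∈ Ideal.map (Ideal.Quotient.mk (𝔪 ^ r)) 𝔪 ^ (k + 1)) :
    ∃ ψ : ℙ →ₐ[K] ℙ, (∀ g, ψ g - g ∈ 𝔪 ^ (k + 1)) ∧
      ∀ g, σ (Ideal.Quotient.mk _ g) = Ideal.Quotient.mk _ (ψ g) := by
  have h_lift (j : ι) : ∃ e ∈ 𝔪 ^ (k + 1),
      Ideal.Quotient.mk (𝔪 ^ r) e = σ (Ideal.Quotient.mk _ (X j)) - Ideal.Quotient.mk _ (X j) := by
    rw [← Ideal.mem_map_iff_of_surjective _ Ideal.Quotient.mk_surjective, Ideal.map_pow]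
    exact hσ _
  choose e he hσe using h_lift
  obtain ⟨ψ, hψ⟩ := exists_algHom_X_eq fun j ↦
    add_mem (X_mem_maximalIdeal j) (Ideal.pow_le_self k.succ_ne_zero (he j))
  have h_comm : (Ideal.Quotient.mkₐ K (𝔪 ^ r)).comp ψ = σ.comp (Ideal.Quotient.mkₐ K (𝔪 ^ r)) := by
    refine algHom_ext_of_pow_eq_bot (map_quotientMk_pow_eq_bot 𝔪 r) (mkₐ_comp_X_mem_map ψ r)
      fun j ↦ ?_
    simp [hψ, hσe]
  refine ⟨ψ, fun g ↦ ?_, fun g ↦ (DFunLike.congr_fun h_comm g).symm⟩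
  exact sub_mem_pow_of_X (ψ' := .id K ℙ) (fun j ↦ by simpa [hψ] using he j) g

lemma exists_contactMonoid_lift {τ : Module.End K (ℙ ⧸ 𝔪 ^ r)}
    (hτ : τ ∈ contactMonoid K (Ideal.map (Ideal.Quotient.mk (𝔪 ^ r)) 𝔪) k) :
    ∃ τ' ∈ contactMonoid K 𝔪 k, ∀ g, τ (Ideal.Quotient.mk _ g) = Ideal.Quotient.mk _ (τ' g) := by
  obtain ⟨hu, σ, hσ, hτσ⟩ := hτ
  obtain ⟨ψ, hψ, hσψ⟩ := exists_algHom_lift_quotient_pow hσ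
  obtain ⟨e, he, hue⟩ := (Ideal.mem_map_iff_of_surjective _ Ideal.Quotient.mk_surjective).1 hu
  refine ⟨LinearMap.mulLeft K (1 + e) ∘ₗ ψ.toLinearMap, ⟨?_, ψ, hψ, fun g ↦ ?_⟩, fun g ↦ ?_⟩
  · simpa using he
  · simp
  · simp [hτσ (Ideal.Quotient.mk _ g), hσψ, hue]

lemma exists_contactMonoid_quotient_iff {f w : ℙ} :
    (∃ τ ∈ contactMonoid K (Ideal.map (Ideal.Quotient.mk (𝔪 ^ r)) 𝔪) k,
      τ (Ideal.Quotient.mk _ f) = Ideal.Quotient.mk _ w) ↔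
    ∃ τ ∈ contactMonoid K 𝔪 k, τ f - w ∈ 𝔪 ^ r := by
  constructor
  · rintro ⟨τ, hτ, hτf⟩
    obtain ⟨τ', hτ', hττ'⟩ := exists_contactMonoid_lift hτ
    exact ⟨τ', hτ', Ideal.Quotient.eq.1 (hττ' f ▸ hτf)⟩
  · rintro ⟨τ, hτ, hτf⟩
    obtain ⟨τ', hτ', hττ'⟩ := exists_contactMonoid_quotient hτ r
    exact ⟨τ', hτ', hττ' f ▸ Ideal.Quotient.eq.2 hτf⟩

lemma map_mem_pow (ψ : ℙ →ₐ[K] ℙ) {i : ℕ} {g : ℙ} (hg : g ∈ 𝔪 ^ i) : ψ g ∈ 𝔪 ^ i :=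
  map_mem_pow_of_X (map_X_mem_maximalIdeal ψ) hg

lemma isUnit_of_map_eq_mul_add {φ : ℙ ≃ₐ[K] ℙ} {f u e : ℙ} (hf : f ∉ 𝔪 ^ N) (he : e ∈ 𝔪 ^ N)
    (hφf : φ f = u * f + e) : IsUnit u := by
  by_contra hu
  have h_mem (i : ℕ) (hi : i ≤ N) : f ∈ 𝔪 ^ i := by
    induction i with
    | zero => simp
    | succ i ih =>
      have h_map : φ f ∈ 𝔪 ^ (i + 1) := hφf ▸ add_mem
        (pow_succ' 𝔪 i ▸ Ideal.mul_mem_mul hu (ih (Nat.le_of_succ_le hi)))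
        (Ideal.pow_le_pow_right hi he)
      simpa using map_mem_pow (φ.symm : ℙ →ₐ[K] ℙ) h_map
  exact hf (h_mem N le_rfl)

lemma exists_mem_contactMonoid_sub_smul_mem {φ : ℙ ≃ₐ[K] ℙ} {ψ : ℙ →ₐ[K] ℙ} {f : ℙ}
    (hψ : ∀ g, ψ g - φ g ∈ 𝔪 ^ (k + 1)) (hf : f ∉ 𝔪 ^ N)
    (hφf : φ f ∈ Ideal.span {f} ⊔ 𝔪 ^ N) :
    ∃ b : K, b ≠ 0 ∧ ∃ τ ∈ contactMonoid K 𝔪 k, τ f - b • ψ f ∈ 𝔪 ^ N := by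
  obtain ⟨u, e, he, hue⟩ := Ideal.mem_span_singleton_sup.1 hφf
  have hu : constantCoeff u ≠ 0 := isUnit_iff_ne_zero.1
    (isUnit_iff_constantCoeff.1 (isUnit_of_map_eq_mul_add hf he hue.symm))
  let σ : ℙ →ₐ[K] ℙ := ψ.comp φ.symm
  have hσ (g : ℙ) : σ g - g ∈ 𝔪 ^ (k + 1) := by simpa [σ] using hψ (φ.symm g)
  have hψf : ψ f = σ u * σ f + σ e := by
    rw [← map_mul, ← map_add, hue]
    simp [σ]
  set b := (constantCoeff u)⁻¹
  refine ⟨b, inv_ne_zero hu, LinearMap.mulLeft K (b • σ u) ∘ₗ σ.toLinearMap, ⟨?_, σ, hσ, ?_⟩, ?_⟩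
  · rw [mem_maximalIdeal_iff]
    simp [smul_eq_C_mul, constantCoeff_algHom_apply, b, hu]
  · simp
  · have h_sub : b • (σ u * σ f) - b • ψ f = -(b • σ e) := by
      rw [hψf, smul_add, sub_add_cancel_left]
    simpa [h_sub] using Submodule.smul_of_tower_mem _ b (map_mem_pow σ he)

lemma algHom_apply_mem_regularMaps {Y B : Type*} [CommRing B] [Algebra K B]
    {R : Subalgebra K (Y → K)} {ψ : Y → ℙ →ₐ[K] B} {I : Ideal B} {r : ℕ} (hI : I ^ r = ⊥)
    (hψI : ∀ x j, ψ x (X j) ∈ I)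
    (hψR : ∀ j, (fun x ↦ ψ x (X j)) ∈ regularMaps R B) (g : ℙ) :
    (fun x ↦ ψ x g) ∈ regularMaps R B := by
  simp only [fun x ↦ map_eq_map_truncTotal hI (hψI x) g]
  induction truncTotal r g using MvPolynomial.induction_on with
  | C a =>
    have h_const (x : Y) : ψ x (MvPolynomial.C a : MvPolynomial ι K) = algebraMap K B a := by
      rw [MvPolynomial.coe_C]
      exact (ψ x).commutes a
    simpa only [h_const] using const_mem_regularMaps (algebraMap K B a)
  | add p q hp hq =>
    simp only [MvPolynomial.coe_add, map_add]
    exact add_mem hp hq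
  | mul_X p j hp =>
    simp only [MvPolynomial.coe_mul, MvPolynomial.coe_X, map_mul]
    exact mul_mem_regularMaps hp (hψR j)

lemma truncTotal_succ_mem_maximalIdeal {g : ℙ} (hg : g ∈ 𝔪) :
    (truncTotal (k + 1) g : ℙ) ∈ 𝔪 := by
  simpa using sub_mem hg (Ideal.pow_le_self k.succ_ne_zero (sub_truncTotal_mem_pow (k + 1) g))

variable (k) in
/-- The endomorphism obtained from `φ` by truncating the images of the variables to their
`k`-jets. -/
def jetHom (φ : ℙ →ₐ[K] ℙ) : ℙ →ₐ[K] ℙ :=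
  substAlgHom (a := fun j ↦ (truncTotal (k + 1) (φ (X j)) : ℙ)) <|
    hasSubst_of_constantCoeff_zero fun j ↦ mem_maximalIdeal_iff.1 <|
      truncTotal_succ_mem_maximalIdeal (map_X_mem_maximalIdeal φ j)

lemma jetHom_X (φ : ℙ →ₐ[K] ℙ) (j : ι) : jetHom k φ (X j) = truncTotal (k + 1) (φ (X j)) :=
  substAlgHom_X _ j

lemma jetHom_sub_mem (φ : ℙ →ₐ[K] ℙ) (g : ℙ) : jetHom k φ g - φ g ∈ 𝔪 ^ (k + 1) := by
  refine sub_mem_pow_of_X (fun j ↦ ?_) g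
  rw [jetHom_X, ← neg_mem_iff, neg_sub]
  exact sub_truncTotal_mem_pow _ _

variable (ι K) in
/-- The functions on the pairs of a scalar and an endomorphism that serve as coordinates: the
scalar and the coefficients of degree at most `k` of the images of the variables. -/
def jetCoordinates (k : ℕ) : Set (K × (ℙ →ₐ[K] ℙ) → K) :=
  {Prod.fst} ∪ Set.image2 (fun j d x ↦ coeff d (x.2 (X j))) Set.univ {d | d.degree < k + 1}

variable (ι K) in
/-- The algebra of polynomial functions on the pairs of a scalar and the `k`-jet of an
endomorphism. -/
def jetRing (k : ℕ) : Subalgebra K (K × (ℙ →ₐ[K] ℙ) → K) :=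
  Algebra.adjoin K (jetCoordinates ι K k)

instance isNoetherianRing_jetRing : IsNoetherianRing (jetRing ι K k) := by
  have h_fin : (jetCoordinates ι K k).Finite := (Set.finite_singleton _).union
    (Set.finite_univ.image2 _ (Finsupp.finite_of_degree_lt (k + 1)))
  have : Algebra.FiniteType K (jetRing ι K k) :=
    (Subalgebra.fg_iff_finiteType _).1 (Subalgebra.fg_def.2 ⟨_, h_fin, rfl⟩)
  exact Algebra.FiniteType.isNoetherianRing K _

lemma coe_truncTotal_eq_sum (g : ℙ) : (truncTotal N g : ℙ) =
    ∑ d ∈ (Finsupp.finite_of_degree_lt N).toFinset, coeff d g • monomial d 1 := by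
  change MvPolynomial.coeToMvPowerSeries.ringHom (truncTotal N g) = _
  rw [truncTotal, truncFinset_apply, map_sum]
  refine Finset.sum_congr rfl fun d _ ↦ ?_
  rw [MvPolynomial.coeToMvPowerSeries.ringHom_apply, MvPolynomial.coe_monomial, ← map_smul,
    smul_eq_mul, mul_one]

lemma jetHom_X_mem_regularMaps (j : ι) :
    (fun x ↦ jetHom k x.2 (X j)) ∈ regularMaps (jetRing ι K k) ℙ := by
  simp only [jetHom_X, coe_truncTotal_eq_sum, ← Finset.sum_fn]
  refine sum_mem fun d hd ↦ smul_const_mem_regularMaps (Algebra.subset_adjoin ?_) _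
  exact .inr (Set.mem_image2_of_mem (Set.mem_univ j) (by simpa using hd))

lemma mk_smul_jetHom_mem_regularMaps (f : ℙ) (N : ℕ) :
    (fun x ↦ Ideal.Quotient.mk (𝔪 ^ N) (x.1 • jetHom k x.2 f)) ∈
      regularMaps (jetRing ι K k) (ℙ ⧸ 𝔪 ^ N) := by
  let π : ℙ →ₐ[K] ℙ ⧸ 𝔪 ^ N := Ideal.Quotient.mkₐ K (𝔪 ^ N)
  have h_fst : Prod.fst ∈ regularMaps (jetRing ι K k) K := by
    simpa using smul_const_mem_regularMaps (R := jetRing ι K k)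
      (Algebra.subset_adjoin (.inl rfl)) (1 : K)
  have h_X (x : K × (ℙ →ₐ[K] ℙ)) (j : ι) :
      π.comp (jetHom k x.2) (X j) ∈ Ideal.map (Ideal.Quotient.mk (𝔪 ^ N)) 𝔪 :=
    mkₐ_comp_X_mem_map (jetHom k x.2) N j
  have h_jet : (fun x ↦ π (jetHom k x.2 f)) ∈ regularMaps (jetRing ι K k) (ℙ ⧸ 𝔪 ^ N) :=
    algHom_apply_mem_regularMaps (map_quotientMk_pow_eq_bot 𝔪 N) h_X
      (fun j ↦ map_mem_regularMaps π.toLinearMap (jetHom_X_mem_regularMaps j)) f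
  exact map₂_mem_regularMaps (LinearMap.lsmul K (ℙ ⧸ 𝔪 ^ N)) h_fst h_jet

/-- The pairs `(b, φ)` such that `b • φ f`, with `φ` replaced by its `k`-jet, lies modulo
`𝔪 ^ N` in the orbit of `f` under contact transformations of order `k`. -/
def contactLocus (k : ℕ) (f : ℙ) (N : ℕ) : Set (K × (ℙ →ₐ[K] ℙ)) :=
  {x | ∃ τ ∈ contactMonoid K 𝔪 k, τ f - x.1 • jetHom k x.2 f ∈ 𝔪 ^ N}

lemma contactLocus_anti (k : ℕ) (f : ℙ) : Antitone (contactLocus k f) :=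
  fun _ _ hN _ ⟨τ, hτ, hτf⟩ ↦ ⟨τ, hτ, Ideal.pow_le_pow_right hN hτf⟩

lemma isAlgebraicSet_contactLocus [CharZero K] (hk : k ≠ 0) (f : ℙ) (N : ℕ) :
    IsAlgebraicSet (jetRing ι K k) (contactLocus k f N) := by
  have h_unipotent := isUnipotent_contactMonoid (K := K) hk (map_quotientMk_pow_eq_bot 𝔪 N)
  have h_orbit := h_unipotent.isAlgebraicSet_orbit (Ideal.Quotient.mk (𝔪 ^ N) f)
    (mk_smul_jetHom_mem_regularMaps (k := k) f N)
  simpa only [exists_contactMonoid_quotient_iff, contactLocus] using h_orbit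

lemma exists_forall_exists_algEquiv_mem_sup [CharZero K] (hk : k ≠ 0) {f : ℙ} (hf : f ≠ 0) :
    ∃ N₀, ∀ φ : ℙ ≃ₐ[K] ℙ, φ f ∈ Ideal.span {f} ⊔ 𝔪 ^ N₀ → ∀ N, ∃ φ' : ℙ ≃ₐ[K] ℙ,
      φ' f ∈ Ideal.span {f} ⊔ 𝔪 ^ N ∧ ∀ g, φ' g - φ g ∈ 𝔪 ^ (k + 1) := by
  obtain ⟨N₁, hN₁⟩ := exists_forall_eq_of_antitone_isAlgebraicSet (contactLocus_anti k f)
    (isAlgebraicSet_contactLocus hk f)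
  obtain ⟨d, hd⟩ : ∃ d, f ∉ 𝔪 ^ d := by
    contrapose! hf
    exact eq_zero_of_forall_mem_pow hf
  refine ⟨max N₁ d, fun φ hφ N ↦ ?_⟩
  have hfN : f ∉ 𝔪 ^ max N₁ d := fun h ↦ hd (Ideal.pow_le_pow_right (le_max_right _ _) h)
  have h_jet (g : ℙ) : jetHom k (φ : ℙ →ₐ[K] ℙ) g - φ g ∈ 𝔪 ^ (k + 1) := jetHom_sub_mem _ g
  obtain ⟨b, hb, h_locus⟩ := exists_mem_contactMonoid_sub_smul_mem h_jet hfN hφ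
  have h_locus' : (b, (φ : ℙ →ₐ[K] ℙ)) ∈ contactLocus k f (max N₁ N) := by
    rw [hN₁ _ (le_max_left _ _)]
    exact contactLocus_anti k f (le_max_left _ _) h_locus
  obtain ⟨τ, hτ, hτf⟩ := contactLocus_anti k f (le_max_right _ _) h_locus'
  exact exists_algEquiv_mem_sup_of_contactMonoid hk h_jet hb hτ hτf

lemma exists_algEquiv_seq [CharZero K] (hk : k ≠ 0) {f : ℙ} (hf : f ≠ 0) :
    ∃ N, ∀ φ : ℙ ≃ₐ[K] ℙ, φ f ∈ Ideal.span {f} ⊔ 𝔪 ^ N → ∃ θ : ℕ → ℙ ≃ₐ[K] ℙ, θ 0 = φ ∧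
      (∀ i, θ i f ∈ Ideal.span {f} ⊔ 𝔪 ^ i) ∧ ∀ i g, θ (i + 1) g - θ i g ∈ 𝔪 ^ (k + i) := by
  have h_step (i : ℕ) := exists_forall_exists_algEquiv_mem_sup (k := k + i) (by omega) hf
  choose ν hν using h_step
  let Θ (i : ℕ) : Type _ := {θ : ℙ ≃ₐ[K] ℙ // θ f ∈ Ideal.span {f} ⊔ 𝔪 ^ max (ν i) i}
  have h_next (i : ℕ) (θ : Θ i) : ∃ θ' : Θ (i + 1), ∀ g, θ'.1 g - θ.1 g ∈ 𝔪 ^ (k + i + 1) := by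
    obtain ⟨θ', hθ'f, hθ'⟩ :=
      hν i θ.1 (mem_sup_pow_of_le (le_max_left _ _) θ.2) (max (ν (i + 1)) (i + 1))
    exact ⟨⟨θ', hθ'f⟩, hθ'⟩
  choose next h_next using h_next
  refine ⟨max (ν 0) 0, fun φ hφ ↦ ?_⟩
  let θ : ∀ i, Θ i := fun i ↦ Nat.rec ⟨φ, hφ⟩ next i
  exact ⟨fun i ↦ (θ i).1, rfl, fun i ↦ mem_sup_pow_of_le (le_max_right _ _) (θ i).2,
    fun i g ↦ Ideal.pow_le_pow_right (Nat.le_succ _) (h_next i (θ i) g)⟩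

lemma exists_algHom_sub_mem_pow_of_cauchy {θ : ℕ → ℙ →ₐ[K] ℙ}
    (hθ : ∀ i j, θ (i + 1) (X j) - θ i (X j) ∈ 𝔪 ^ (k + i)) :
    ∃ ψ : ℙ →ₐ[K] ℙ, ∀ i g, ψ g - θ i g ∈ 𝔪 ^ (k + i) := by
  have h_lim (j : ι) : ∃ L, ∀ i, L - θ i (X j) ∈ 𝔪 ^ (k + i) :=
    exists_sub_mem_pow_of_cauchy fun i ↦ hθ i j
  choose y hy using h_lim
  have hy_mem (j : ι) : y j ∈ 𝔪 := by
    simpa using add_mem (Ideal.pow_le_self (by omega) (hy j 1))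
      (map_X_mem_maximalIdeal (θ 1) j)
  obtain ⟨ψ, hψ⟩ := exists_algHom_X_eq hy_mem
  exact ⟨ψ, fun i ↦ sub_mem_pow_of_X fun j ↦ hψ j ▸ hy j i⟩

end Finite

end PowerSeries

theorem autLog_approximation_general {ι K : Type*} [Finite ι] [Field K] [CharZero K]
    (f : MvPowerSeries ι K) (k : ℕ) :
    ∃ N, ∀ φ : MvPowerSeries ι K ≃ₐ[K] MvPowerSeries ι K,
      φ f ∈ Ideal.span {f} ⊔ IsLocalRing.maximalIdeal (MvPowerSeries ι K) ^ N →
      ∃ ψ : MvPowerSeries ι K ≃ₐ[K] MvPowerSeries ι K, ψ f ∈ Ideal.span {f} ∧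
        ∀ g, φ g - ψ g ∈ IsLocalRing.maximalIdeal (MvPowerSeries ι K) ^ k := by
  rcases eq_or_ne f 0 with rfl | hf
  · exact ⟨0, fun φ _ ↦ ⟨φ, by simp, by simp⟩⟩
  obtain ⟨N, hN⟩ := exists_algEquiv_seq (k := k + 2) (by omega) hf
  refine ⟨N, fun φ hφ ↦ ?_⟩
  obtain ⟨θ, rfl, hθf, hθ⟩ := hN φ hφ
  obtain ⟨ψ, hψ⟩ := exists_algHom_sub_mem_pow_of_cauchy (k := k + 2)
    (θ := fun i ↦ (θ i : MvPowerSeries ι K →ₐ[K] MvPowerSeries ι K))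
    fun i j ↦ hθ i (MvPowerSeries.X j)
  obtain ⟨ψ', hψ'⟩ := exists_algEquiv_of_sub_mem_sq (φ := θ 0) (ψ := ψ)
    fun g ↦ Ideal.pow_le_pow_right (by omega) (hψ 0 g)
  refine ⟨ψ', mem_of_forall_mem_sup_pow fun i ↦ ?_, fun g ↦ ?_⟩
  · have h_close := Ideal.pow_le_pow_right (Nat.le_add_left i (k + 2)) (hψ i f)
    simpa [hψ'] using add_mem (Ideal.mem_sup_right h_close) (hθf i)
  · rw [hψ', ← neg_mem_iff, neg_sub]
    exact Ideal.pow_le_pow_right (by omega) (hψ 0 g)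

/-- Let `P = ℂ[[x₁,…,xₙ]]` with maximal ideal `m` and `0 ≠ f ∈ m`. For every `k ∈ ℕ` there
exists `m₀ ∈ ℕ` such that: for every ℂ-algebra automorphism `φ` of `P` with `φ(m) = m` and
`φ(f) ∈ (f) + m^{m₀+1}`, there exists a ℂ-algebra automorphism `ψ` of `P` with `ψ(m) = m`,
`ψ(f) ∈ (f)`, and `φ(xⱼ) − ψ(xⱼ) ∈ m^{k+2}` for all `j`. -/
theorem autLog_approximation {n : ℕ} (hn : 0 < n)
    (f : MvPowerSeries (Fin n) ℂ) (hf0 : f ≠ 0) (hfm : f ∈ mIdeal n) (k : ℕ) :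
    ∃ m₀ : ℕ, ∀ φ : MvPowerSeries (Fin n) ℂ ≃ₐ[ℂ] MvPowerSeries (Fin n) ℂ,
      (∀ g, g ∈ mIdeal n ↔ φ g ∈ mIdeal n) →
      φ f ∈ Ideal.span {f} ⊔ mIdeal n ^ (m₀ + 1) →
      ∃ ψ : MvPowerSeries (Fin n) ℂ ≃ₐ[ℂ] MvPowerSeries (Fin n) ℂ,
        (∀ g, g ∈ mIdeal n ↔ ψ g ∈ mIdeal n) ∧
        ψ f ∈ Ideal.span {f} ∧
        ∀ j, φ (MvPowerSeries.X j) - ψ (MvPowerSeries.X j) ∈ mIdeal n ^ (k + 2) := by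
  have h_max : mIdeal n = IsLocalRing.maximalIdeal _ := (maximalIdeal_eq_span_X (Fin n) ℂ).symm
  simp only [h_max]
  obtain ⟨N, hN⟩ := autLog_approximation_general f (k + 2)
  refine ⟨N, fun φ _ hφ ↦ ?_⟩
  obtain ⟨ψ, hψf, hψ⟩ := hN φ (mem_sup_pow_of_le N.le_succ hφ)
  exact ⟨ψ, fun g ↦ (map_mem_maximalIdeal_iff ψ.toAlgHom).symm, hψf, fun j ↦ hψ _⟩
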